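/- Let g ∈ L¹(ℝ) be a totally positive function of finite type m ≥ 2, identified with its continuous representative, let M ∈ ℕ and K ∈ ℕ with K/M ∈ ℕ. If K/M is odd, then the Gabor family G(P_K S g, M, 1/M) (at the critical density α = M, β = 1/M) is a frame for ℂ^K: there exist A, B > 0 such that A‖f‖² ≤ Σ_{k=0}^{K/M−1} Σ_{l=0}^{M−1} |⟨f, M_{l/M}T_{kM}(P_K S g)⟩|² ≤ B‖f‖² for all f ∈ ℂ^K. -/

import Mathlib

/-!
Write `N = K / M`. At the critical density the analysis map `f ↦ (⟨f, M_{l/M} T_{kM} P_K S g⟩)` is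
diagonalised by finite Fourier transforms, and it is injective as soon as the finite Zak transform
`∑_{s < N} (P_K S g)(x + sM) z^s`, `z^N = 1`, has no zero (`gabor_injective`); in finite dimension
injectivity gives the frame inequalities (`isGaborFrameC_of_injective`). Unfolding the periodization,
this finite sum equals the Zak transform `∑_{k ∈ ℤ} g(x + kM) z^k` (`finite_zak_eq`). Since `N` is
odd, `z ≠ -1`, so it suffices that the Zak transform of `g` vanishes at no unimodular `z ≠ -1`
(`zak_ne_zero`).

By Poisson summation (allowed because `g` decays quadratically, `g_decay`), the Zak transform is, up
to a nonzero factor and rescaling, the Fourier series of a quasi-periodic function,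
`F (u + 1) = ζ F u` with `ζ = z⁻¹ = exp (-2πiν)`, whose coefficients are
`∏ₖ (1 + 2πi δₖ (n - ν))⁻¹`. Such an `F` is built by solving successively `F₊ + δ F₊' = F` for `F₊`
among quasi-periodic functions, beginning with a piecewise exponential function (`quasiPos_base`,
`quasiPos_step`). Fix `ω` with `Re ω > 0` and `Re (ω ζ) > 0`; the choice `ω = 1 + conj ζ` works
exactly because `ζ ≠ -1`. The invariant preserved by the construction is
`0 ≤ Re (ω conj(F x) F y)` for `x ≤ y ≤ x + 1`.

To see this, put `h s = exp (s / δ) F s` and `w = exp (1 / δ) ζ`, so that `h (s + 1) = w h s`. The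
new function at `x` is a nonzero constant times a positive exponential times `∫_x^{x+1} h`. With
`A = ∫_x^y h` and `B = ∫_y^{x+1} h`, its values at `x` and `y` are governed by `A + B` and `B + w A`,
and `Re (ω conj(A + B) (B + w A))` is the sum of the nonnegative terms `Re ω |B|²`, `Re (ω w) |A|²`,
`Re (ω conj(A) B)` and `Re (ω conj(B) w A)`. If the new function vanishes at `x`, then `A = 0` for all
`y`, so it vanishes identically; this contradicts its Fourier coefficients being nonzero.
-/

open MeasureTheory Complex FourierTransform

/-- Periodization and sampling: `(P_K S g)(j) = ∑_{n ∈ ℤ} g(j - nK)`, viewed as a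
`K`-periodic sequence on `ℤ`. -/
noncomputable def periodizeSample (K : ℕ) (g : ℝ → ℂ) (j : ℤ) : ℂ :=
  ∑' n : ℤ, g ((j : ℝ) - n * K)

/-- The Gabor coefficient `⟨f, M_{l/M} T_{ka} g⟩` in `ℂ^K`, for a `K`-periodic
window sequence `g : ℤ → ℂ`, where `(M_{l/M}T_{ka}g)(j) = g(j - ka) e^{2πi l j/M}`. -/
noncomputable def gaborCoefC (g : ℤ → ℂ) (K a M : ℕ) (f : Fin K → ℂ) (k l : ℕ) : ℂ :=
  ∑ j : Fin K, f j * star (g ((j : ℤ) - k * (a : ℤ)) *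
    Complex.exp (2 * (Real.pi : ℂ) * Complex.I * (l : ℂ) * ((j : ℕ) : ℂ) / (M : ℂ)))

/-- The Gabor family `G(g, a, 1/M)` is a frame for `ℂ^K`. -/
def IsGaborFrameC (g : ℤ → ℂ) (K a M : ℕ) : Prop :=
  ∃ A B : ℝ, 0 < A ∧ 0 < B ∧ ∀ f : Fin K → ℂ,
    A * (∑ j : Fin K, ‖f j‖ ^ 2) ≤
        (∑ k ∈ Finset.range (K / a), ∑ l ∈ Finset.range M, ‖gaborCoefC g K a M f k l‖ ^ 2) ∧
      (∑ k ∈ Finset.range (K / a), ∑ l ∈ Finset.range M, ‖gaborCoefC g K a M f k l‖ ^ 2) ≤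
        B * (∑ j : Fin K, ‖f j‖ ^ 2)

open scoped ComplexConjugate

/-! ### Quasi-periodic functions with a positivity condition -/

/-- `F` is quasi-periodic with multiplier `ζ = exp (-2πiν)`, its values at points at distance at
most one apart satisfy the positivity condition `0 ≤ Re (ω conj(F x) F y)`, and the Fourier
coefficients of the `1`-periodic function `exp (2πiνu) F u` are `c n`.
Continuity is asked only inside `(0, 1)`, so that jumps at the integers are allowed. -/
structure QuasiPos (ν : ℝ) (ω : ℂ) (F : ℝ → ℂ) (c : ℤ → ℂ) : Prop where
  quasi : ∀ u, F (u + 1) = exp (-(2 * Real.pi * I * ν)) * F u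
  int : ∀ a b, IntervalIntegrable F volume a b
  cont : ContinuousOn F (Set.Ioo 0 1)
  pos : ∀ x y, x ≤ y → y ≤ x + 1 → 0 ≤ (ω * (conj (F x) * F y)).re
  coef : ∀ n : ℤ, ∫ u in (0 : ℝ)..1, exp (-(2 * Real.pi * I * (n - ν) * u)) * F u = c n

lemma re_mul_integral_nonneg {F : ℝ → ℂ} {a b : ℝ} (hab : a ≤ b)
    (hF : IntervalIntegrable F volume a b) (c : ℂ)
    (h : ∀ t ∈ Set.Icc a b, 0 ≤ (c * F t).re) : 0 ≤ (c * ∫ t in a..b, F t).re := by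
  rw [← intervalIntegral.integral_const_mul]
  have h2 := Complex.reCLM.intervalIntegral_comp_comm (hF.const_mul c)
  simp only [Complex.reCLM_apply] at h2
  rw [← h2]
  exact intervalIntegral.integral_nonneg hab h

lemma re_pair_nonneg {F : ℝ → ℂ} {a b c d : ℝ} (hab : a ≤ b) (hcd : c ≤ d)
    (hF : IntervalIntegrable F volume a b) (hF' : IntervalIntegrable F volume c d) (ω : ℂ)
    (h : ∀ s ∈ Set.Icc a b, ∀ t ∈ Set.Icc c d, 0 ≤ (ω * (conj (F s) * F t)).re) :
    0 ≤ (ω * (conj (∫ s in a..b, F s) * ∫ t in c..d, F t)).re := by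
  set B := ∫ t in c..d, F t with hB
  have h1 : ∀ s ∈ Set.Icc a b, 0 ≤ (conj (ω * B) * F s).re := by
    intro s hs
    have := re_mul_integral_nonneg hcd hF' (ω * conj (F s)) (by
      intro t ht
      have := h s hs t ht
      rwa [← mul_assoc] at this)
    rw [← hB] at this
    convert this using 1
    simp [Complex.mul_re, Complex.mul_im]
    ring
  have h2 := re_mul_integral_nonneg hab hF _ h1
  convert h2 using 1
  simp [Complex.mul_re, Complex.mul_im]
  ring

/-- The quadratic form behind the induction: expanding `conj (A + B) * (B + w A)` gives four
terms, each nonnegative in the situation of `quasiPos_step`. -/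
lemma expand_form (ω w A B : ℂ) :
    (ω * (conj (A + B) * (B + w * A))).re =
      ω.re * normSq B + (ω * w).re * normSq A + (ω * (conj A * B)).re
        + (ω * (conj B * (w * A))).re := by
  simp [Complex.mul_re, Complex.mul_im, normSq_apply]
  ring

/-- The quasi-periodic solution `F'` of the differential equation `F' + δ dF'/du = F` inherits the
positivity condition, and it has no zero unless it is identically zero. -/
lemma quasiPos_step {ν : ℝ} {ω : ℂ} {F : ℝ → ℂ} {c : ℤ → ℂ} (hF : QuasiPos ν ω F c)
    (hω : 0 < ω.re) (hωζ : 0 < (ω * exp (-(2 * Real.pi * I * ν))).re)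
    {δ : ℝ} (hδ : δ ≠ 0) :
    ∃ F' : ℝ → ℂ, Continuous F' ∧
      QuasiPos ν ω F' (fun n => c n * (1 + 2 * Real.pi * I * δ * (n - ν))⁻¹) ∧
      ((∃ x, F' x = 0) → ∀ x, F' x = 0) := by
  set ζ : ℂ := exp (-(2 * Real.pi * I * ν)) with hζ
  have hζn : ‖ζ‖ = 1 := by
    rw [hζ, Complex.norm_exp]; simp
  set r : ℝ := Real.exp (1 / δ) with hr
  have hr0 : 0 < r := Real.exp_pos _
  have hr1 : r ≠ 1 := by
    rw [hr, Ne, Real.exp_eq_one_iff]; simpa using hδ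
  set w : ℂ := r * ζ with hw
  have hw1 : w - 1 ≠ 0 := by
    intro h
    apply hr1
    have : ‖w‖ = 1 := by rw [sub_eq_zero.mp h]; simp
    rw [hw, norm_mul, hζn] at this
    simpa [abs_of_pos hr0] using this
  have hωw : 0 < (ω * w).re := by
    have : ω * w = (r : ℂ) * (ω * ζ) := by rw [hw]; ring
    rw [this, Complex.re_ofReal_mul]; positivity
  set h : ℝ → ℂ := fun s => (Real.exp (s / δ) : ℂ) * F s with hh
  have hE : Continuous fun s : ℝ => (Real.exp (s / δ) : ℂ) := by fun_prop
  have hhi : ∀ a b, IntervalIntegrable h volume a b := fun a b =>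
    (hF.int a b).continuousOn_mul hE.continuousOn
  have hq : ∀ s, h (s + 1) = w * h s := by
    intro s
    simp only [hh, hF.quasi, hw, hr, add_div, Real.exp_add]
    push_cast
    ring
  have hpos : ∀ x y, x ≤ y → y ≤ x + 1 → 0 ≤ (ω * (conj (h x) * h y)).re := by
    intro x y hx hy
    have := hF.pos x y hx hy
    have e : ω * (conj (h x) * h y) =
        ((Real.exp (x / δ) * Real.exp (y / δ) : ℝ) : ℂ) * (ω * (conj (F x) * F y)) := by
      simp only [hh, map_mul, Complex.conj_ofReal]
      push_cast
      ring
    rw [e, Complex.re_ofReal_mul]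
    positivity
  set J : ℝ → ℂ := fun x => ∫ s in (0 : ℝ)..x, h s with hJ
  have hJsub : ∀ a b, ∫ s in a..b, h s = J b - J a := fun a b =>
    (intervalIntegral.integral_interval_sub_left (hhi _ _) (hhi _ _)).symm
  have hshift : ∀ a b, ∫ s in (a + 1)..(b + 1), h s = w * ∫ s in a..b, h s := by
    intro a b
    rw [← intervalIntegral.integral_comp_add_right, ← intervalIntegral.integral_const_mul]
    simp_rw [hq]
  have hJ1 : ∀ x, J (x + 1) = J 1 + w * J x := by
    intro x
    have h1 := hshift 0 x
    rw [hJsub, hJsub] at h1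
    have h2 : J 0 = 0 := by simp [hJ]
    rw [h2] at h1
    simp only [zero_add, sub_zero] at h1
    rw [← h1]; ring
  have hJc : Continuous J := intervalIntegral.continuous_primitive hhi 0
  set S : ℝ → ℂ := fun x => J 1 + (w - 1) * J x with hS
  have hSc : Continuous S := by fun_prop
  have hSq : ∀ x, S (x + 1) = w * S x := by
    intro x; simp only [hS, hJ1]; ring
  set κ : ℂ := ((δ : ℂ) * (w - 1))⁻¹ with hκ
  have hδ' : (δ : ℂ) ≠ 0 := by exact_mod_cast hδ
  have hκ0 : κ ≠ 0 := inv_ne_zero (mul_ne_zero hδ' hw1)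
  set F' : ℝ → ℂ := fun x => (Real.exp (-x / δ) : ℂ) * (κ * S x) with hF'
  have hF'c : Continuous F' := by fun_prop
  have hF'q : ∀ u, F' (u + 1) = ζ * F' u := by
    intro u
    have e1 : Real.exp (-(u + 1) / δ) * r = Real.exp (-u / δ) := by
      rw [hr, ← Real.exp_add]; congr 1; field_simp; ring
    simp only [hF', hSq, hw]
    rw [← e1]; push_cast; ring
  -- the quadratic form at `x ≤ y ≤ x + 1`
  have hform : ∀ x y, x ≤ y → y ≤ x + 1 →
      (ω * (conj (S x) * S y)).re ≥ (ω * w).re * normSq (J y - J x) := by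
    intro x y hx hy
    have hA := hJsub x y
    have hB := hJsub y (x + 1)
    have e1 : S x = (J y - J x) + (J (x + 1) - J y) := by simp only [hS, hJ1]; ring
    have e2 : S y = (J (x + 1) - J y) + w * (J y - J x) := by simp only [hS, hJ1]; ring
    rw [e1, e2, expand_form]
    have t1 : 0 ≤ (ω * (conj (J y - J x) * (J (x + 1) - J y))).re := by
      rw [← hA, ← hB]
      exact re_pair_nonneg hx hy (hhi _ _) (hhi _ _) ω fun s hs t ht =>
        hpos s t (hs.2.trans ht.1) (by linarith [ht.2, hs.1])
    have t2 : 0 ≤ (ω * (conj (J (x + 1) - J y) * (w * (J y - J x)))).re := by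
      rw [← hA, ← hB, ← hshift]
      exact re_pair_nonneg hy (by linarith) (hhi _ _) (hhi _ _) ω fun s hs t ht =>
        hpos s t (hs.2.trans ht.1) (by linarith [ht.2, hs.1])
    have t3 : 0 ≤ ω.re * normSq (J (x + 1) - J y) := mul_nonneg hω.le (normSq_nonneg _)
    linarith
  refine ⟨F', hF'c, ⟨hF'q, fun a b => hF'c.intervalIntegrable a b, hF'c.continuousOn, ?_, ?_⟩, ?_⟩
  · intro x y hx hy
    have e : ω * (conj (F' x) * F' y) =
        ((Real.exp (-x / δ) * Real.exp (-y / δ) * normSq κ : ℝ) : ℂ)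
          * (ω * (conj (S x) * S y)) := by
      simp only [hF', map_mul, Complex.conj_ofReal]
      push_cast
      rw [normSq_eq_conj_mul_self]
      ring
    rw [e, Complex.re_ofReal_mul]
    have := hform x y hx hy
    have h2 : 0 ≤ (ω * w).re * normSq (J y - J x) := mul_nonneg hωw.le (normSq_nonneg _)
    have h3 := normSq_nonneg κ
    have h4 : 0 ≤ (ω * (conj (S x) * S y)).re := by linarith
    positivity
  · intro n
    set b : ℂ := 2 * Real.pi * I * (n - ν) with hb
    have hne : (1 + 2 * Real.pi * I * δ * (n - ν) : ℂ) ≠ 0 := by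
      intro h0
      have := congrArg Complex.re h0
      simp at this
    have hder : ∀ x ∈ Set.Ioo (0 : ℝ) 1,
        HasDerivAt (fun u : ℝ => exp (-(b * u)) * F' u)
          (-(b + 1 / δ) * (exp (-(b * x)) * F' x) + (1 / δ) * (exp (-(b * x)) * F x)) x := by
      intro x hx
      have hcx : ContinuousAt h x := by
        exact (hE.continuousAt).mul (hF.cont.continuousAt (Ioo_mem_nhds hx.1 hx.2))
      have hJd : HasDerivAt J (h x) x := by
        refine intervalIntegral.integral_hasDerivAt_right (hhi _ _) ?_ hcx
        exact ContinuousOn.stronglyMeasurableAtFilter isOpen_Ioo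
          (hE.continuousOn.mul hF.cont) x hx
      have hSd : HasDerivAt S ((w - 1) * h x) x := (hJd.const_mul (w - 1)).const_add (J 1)
      have hEd : HasDerivAt (fun u : ℝ => (Real.exp (-u / δ) : ℂ))
          ((Real.exp (-x / δ) * (-1 / δ) : ℝ) : ℂ) x :=
        (((hasDerivAt_id x).neg.div_const δ).exp).ofReal_comp
      have hed : HasDerivAt (fun u : ℝ => exp (-(b * u))) (exp (-(b * x)) * (-(b * 1))) x :=
        ((((hasDerivAt_id (x : ℂ)).const_mul b).neg).cexp).comp_ofReal
      have := hed.mul (hEd.mul (hSd.const_mul κ))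
      convert! this using 1
      have e1 : (Real.exp (-x / δ) : ℂ) * (Real.exp (x / δ) : ℂ) = 1 := by
        rw [← Complex.ofReal_mul, ← Real.exp_add, neg_div, neg_add_cancel, Real.exp_zero]; simp
      have e2 : κ * (w - 1) = 1 / δ := by
        rw [hκ]; field_simp
      simp only [hF', hh, Pi.mul_apply]
      push_cast at e1 ⊢
      linear_combination (-(Complex.exp (-(b * x)) * F x * Complex.exp (-x / δ) * Complex.exp (x / δ))) * e2
        - (Complex.exp (-(b * x)) * F x / δ) * e1
    have hbc : Continuous fun u : ℝ => exp (-(b * u)) := by fun_prop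
    have hi1 : IntervalIntegrable (fun u : ℝ => exp (-(b * u)) * F' u) volume 0 1 :=
      (hbc.mul hF'c).intervalIntegrable _ _
    have hi2 : IntervalIntegrable (fun u : ℝ => exp (-(b * u)) * F u) volume 0 1 :=
      (hF.int 0 1).continuousOn_mul hbc.continuousOn
    have hftc := intervalIntegral.integral_eq_sub_of_hasDerivAt_of_le (zero_le_one)
      (hbc.mul hF'c).continuousOn hder ((hi1.const_mul _).add (hi2.const_mul _))
    rw [intervalIntegral.integral_add (hi1.const_mul _) (hi2.const_mul _),
      intervalIntegral.integral_const_mul, intervalIntegral.integral_const_mul] at hftc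
    have hc := hF.coef n
    rw [← hb] at hc
    rw [hc] at hftc
    have hper : exp (-(b * (1 : ℝ))) * F' 1 = F' 0 := by
      have h1 := hF'q 0
      rw [zero_add] at h1
      rw [h1, ← mul_assoc]
      have : exp (-(b * (1 : ℝ))) * ζ = 1 := by
        rw [hζ, ← Complex.exp_add, Complex.exp_eq_one_iff]
        refine ⟨-n, ?_⟩
        rw [hb]; push_cast; ring
      rw [this, one_mul]
    have hR : (fun u : ℝ => exp (-(b * u)) * F' u) 1 - (fun u : ℝ => exp (-(b * u)) * F' u) 0 = 0 := by
      simp only [hper]; simp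
    have hftc' := hftc.trans hR
    rw [eq_mul_inv_iff_mul_eq₀ hne]
    have e3 : (1 + 2 * Real.pi * I * δ * (n - ν) : ℂ) = δ * (b + 1 / δ) := by
      rw [hb]; field_simp; ring
    rw [e3]
    have hd : (δ : ℂ) * (1 / δ) = 1 := by field_simp
    linear_combination (-(δ : ℂ)) * hftc' + c n * hd
  · rintro ⟨x₀, hx₀⟩
    have hEne : ∀ x : ℝ, (Real.exp (-x / δ) : ℂ) ≠ 0 := fun x => by
      exact_mod_cast (Real.exp_pos _).ne'
    have hS0 : S x₀ = 0 := by
      simp only [hF', mul_eq_zero] at hx₀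
      rcases hx₀ with h1 | h1 | h1
      · exact absurd h1 (hEne _)
      · exact absurd h1 hκ0
      · exact h1
    have hSy : ∀ y ∈ Set.Ico x₀ (x₀ + 1), S y = 0 := by
      intro y hy
      have h1 := hform x₀ y hy.1 hy.2.le
      rw [hS0] at h1
      simp only [map_zero, zero_mul, mul_zero, zero_re] at h1
      have h2 : normSq (J y - J x₀) ≤ 0 := by
        by_contra hcon
        push Not at hcon
        have := mul_pos hωw hcon
        linarith
      have h3 : J y = J x₀ := by
        have := le_antisymm h2 (normSq_nonneg _)
        rwa [normSq_eq_zero, sub_eq_zero] at this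
      simp only [hS] at hS0 ⊢
      rw [h3, hS0]
    -- `S x = 0` is a `1`-periodic condition
    have hper : Function.Periodic (fun x => S x = 0) 1 := by
      intro x
      have hw0 : w ≠ 0 := by
        rw [hw]; exact mul_ne_zero (by exact_mod_cast hr0.ne') (exp_ne_zero _)
      simp [hSq, hw0]
    intro x
    obtain ⟨y, hy, hxy⟩ := hper.exists_mem_Ico one_pos x x₀
    have : S x = 0 := by
      have := hSy y hy
      rw [← hxy] at this
      exact this
    simp [hF', this]

/-- The quasi-periodic function equal to `exp (-u / δ)` on `[0, 1)`. -/
lemma quasiPos_base (ν : ℝ) {ω : ℂ}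
    (hω : 0 < ω.re) (hωζ : 0 < (ω * exp (-(2 * Real.pi * I * ν))).re)
    {δ : ℝ} (hδ : δ ≠ 0) :
    ∃ (F : ℝ → ℂ) (C : ℂ), C ≠ 0 ∧
      QuasiPos ν ω F (fun n => C * (1 + 2 * Real.pi * I * δ * (n - ν))⁻¹) := by
  set ζ : ℂ := exp (-(2 * Real.pi * I * ν)) with hζ
  have hζn : ‖ζ‖ = 1 := by
    rw [hζ, Complex.norm_exp]; simp
  have hζ0 : ζ ≠ 0 := exp_ne_zero _
  set r : ℝ := Real.exp (-1 / δ) with hr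
  have hr0 : 0 < r := Real.exp_pos _
  have hr1 : r ≠ 1 := by
    rw [hr, Ne, Real.exp_eq_one_iff]; simpa using hδ
  have hδ' : (δ : ℂ) ≠ 0 := by exact_mod_cast hδ
  set F : ℝ → ℂ := fun u => ζ ^ ⌊u⌋ * (Real.exp (-Int.fract u / δ) : ℂ) with hF
  have hw1 : 1 - r * ζ⁻¹ ≠ 0 := by
    intro h
    apply hr1
    have : ‖(r : ℂ) * ζ⁻¹‖ = 1 := by rw [← sub_eq_zero.mp h]; simp
    rw [norm_mul, norm_inv, hζn] at this
    simpa [abs_of_pos hr0] using this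
  have hmeas : Measurable F := by
    apply Measurable.mul
    · exact (measurable_from_top (f := fun n : ℤ => ζ ^ n)).comp Int.measurable_floor
    · exact Complex.measurable_ofReal.comp
        (Real.measurable_exp.comp ((measurable_fract.neg).div_const δ))
  have hbd : ∀ u, ‖F u‖ ≤ Real.exp (1 / |δ|) := by
    intro u
    simp only [hF, norm_mul, norm_zpow, hζn, one_zpow, one_mul, Complex.norm_real, Real.norm_eq_abs,
      Real.abs_exp, Real.exp_le_exp]
    refine (le_abs_self _).trans ?_
    rw [abs_div, abs_neg]
    gcongr
    rw [abs_of_nonneg (Int.fract_nonneg u)]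
    exact (Int.fract_lt_one u).le
  have hzero : ∀ u ∈ Set.Ioo (0 : ℝ) 1, F u = (Real.exp (-u / δ) : ℂ) := by
    intro u hu
    have : ⌊u⌋ = 0 := by rw [Int.floor_eq_zero_iff]; exact ⟨hu.1.le, hu.2⟩
    have h2 : Int.fract u = u := Int.fract_eq_self.mpr ⟨hu.1.le, hu.2⟩
    simp only [hF, this, h2, zpow_zero, one_mul]
  refine ⟨F, δ * (1 - r * ζ⁻¹), mul_ne_zero hδ' hw1, ?_, ?_, ?_, ?_, ?_⟩
  · intro u
    simp only [hF, Int.floor_add_one, Int.fract_add_one, zpow_add_one₀ hζ0]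
    ring
  · intro a b
    refine (intervalIntegrable_const (c := Real.exp (1 / |δ|))).mono_fun
      hmeas.aestronglyMeasurable ?_
    refine Filter.Eventually.of_forall fun u => ?_
    simpa using hbd u
  · refine ContinuousOn.congr (f := fun u : ℝ => (Real.exp (-u / δ) : ℂ)) ?_ hzero
    exact Continuous.continuousOn (by fun_prop)
  · intro x y hx hy
    have hfl : ⌊y⌋ = ⌊x⌋ ∨ ⌊y⌋ = ⌊x⌋ + 1 := by
      have h1 := Int.floor_mono hx
      have h2 := Int.floor_mono hy
      rw [Int.floor_add_one] at h2
      omega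
    have hcc : conj (ζ ^ ⌊x⌋) * ζ ^ ⌊x⌋ = 1 := by
      rw [← normSq_eq_conj_mul_self, normSq_eq_norm_sq, norm_zpow, hζn]; simp
    have key : ∃ p : ℂ, 0 ≤ (ω * p).re ∧ conj (ζ ^ ⌊x⌋) * ζ ^ ⌊y⌋ = p := by
      rcases hfl with h | h
      · exact ⟨1, by simpa using hω.le, by rw [h, hcc]⟩
      · exact ⟨ζ, hωζ.le, by rw [h, zpow_add_one₀ hζ0, ← mul_assoc, hcc, one_mul]⟩
    obtain ⟨p, hp, hpe⟩ := key
    have e : ω * (conj (F x) * F y) =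
        ((Real.exp (-Int.fract x / δ) * Real.exp (-Int.fract y / δ) : ℝ) : ℂ) * (ω * p) := by
      rw [← hpe]
      simp only [hF, map_mul, Complex.conj_ofReal]
      push_cast
      ring
    rw [e, Complex.re_ofReal_mul]
    positivity
  · intro n
    have hne : (1 + 2 * Real.pi * I * δ * (n - ν) : ℂ) ≠ 0 := by
      intro h0
      have := congrArg Complex.re h0
      simp at this
    set q : ℂ := -(2 * Real.pi * I * (n - ν) + 1 / δ) with hq
    have hqe : (1 + 2 * Real.pi * I * δ * (n - ν) : ℂ) = -(δ * q) := by
      rw [hq]; field_simp; ring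
    have hq0 : q ≠ 0 := by
      intro h; rw [hqe, h] at hne; simp at hne
    have e1 : ∫ u in (0 : ℝ)..1, exp (-(2 * Real.pi * I * (n - ν) * u)) * F u
        = ∫ u in (0 : ℝ)..1, exp (q * u) := by
      rw [intervalIntegral.integral_of_le zero_le_one, intervalIntegral.integral_of_le zero_le_one,
        integral_Ioc_eq_integral_Ioo, integral_Ioc_eq_integral_Ioo]
      refine setIntegral_congr_fun measurableSet_Ioo fun u hu => ?_
      rw [hzero u hu]
      push_cast
      rw [← Complex.exp_add]
      congr 1
      rw [hq]; ring
    rw [e1, integral_exp_mul_complex hq0, hqe]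
    have e2 : exp (q * (1 : ℝ)) = r * ζ⁻¹ := by
      rw [hr, hζ, ← Complex.exp_neg]
      push_cast
      rw [← Complex.exp_add, Complex.exp_eq_exp_iff_exists_int]
      refine ⟨-n, ?_⟩
      rw [hq]; push_cast; ring
    rw [e2]
    simp only [ofReal_zero, mul_zero, Complex.exp_zero]
    field_simp
    ring

lemma exists_quasiPos (ν : ℝ) {ω : ℂ}
    (hω : 0 < ω.re) (hωζ : 0 < (ω * exp (-(2 * Real.pi * I * ν))).re) (m : ℕ)
    (δ : Fin (m + 1) → ℝ) (hδ : ∀ i, δ i ≠ 0) :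
    ∃ (F : ℝ → ℂ) (C : ℂ), C ≠ 0 ∧
      QuasiPos ν ω F (fun n => C * ∏ k, (1 + 2 * Real.pi * I * δ k * (n - ν))⁻¹) := by
  induction m with
  | zero =>
    obtain ⟨F, C, hC, h⟩ := quasiPos_base ν hω hωζ (hδ 0)
    exact ⟨F, C, hC, by simpa using h⟩
  | succ m ih =>
    obtain ⟨F, C, hC, h⟩ := ih (fun i => δ i.castSucc) (fun i => hδ _)
    obtain ⟨F', -, h', -⟩ := quasiPos_step h hω hωζ (hδ (Fin.last _))
    refine ⟨F', C, hC, ?_⟩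
    simp only [Fin.prod_univ_castSucc (n := m + 1)]
    simpa only [mul_assoc] using h'

/-! ### Decay estimates and Fourier series -/

lemma one_add_ne_zero (δ ξ : ℝ) : (1 + 2 * (Real.pi : ℂ) * I * (δ : ℂ) * (ξ : ℂ)) ≠ 0 := by
  intro h0
  have := congrArg Complex.re h0
  simp at this

lemma norm_factor_sq (δ ξ : ℝ) :
    ‖(1 + 2 * (Real.pi : ℂ) * I * (δ : ℂ) * (ξ : ℂ))⁻¹‖ ^ 2
      = (1 + (2 * Real.pi * δ) ^ 2 * ξ ^ 2)⁻¹ := by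
  rw [norm_inv, inv_pow, ← normSq_eq_norm_sq, normSq_apply]
  simp
  ring

lemma norm_factor_le_one (δ ξ : ℝ) :
    ‖(1 + 2 * (Real.pi : ℂ) * I * (δ : ℂ) * (ξ : ℂ))⁻¹‖ ≤ 1 := by
  have h := norm_factor_sq δ ξ
  have h1 : (1 + (2 * Real.pi * δ) ^ 2 * ξ ^ 2)⁻¹ ≤ 1 := by
    apply inv_le_one_of_one_le₀
    nlinarith [mul_nonneg (sq_nonneg (2 * Real.pi * δ)) (sq_nonneg ξ)]
  rw [← h] at h1
  exact (sq_le_one_iff₀ (norm_nonneg _)).mp h1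

lemma norm_factor_sq_le {δ : ℝ} (hδ : δ ≠ 0) (ξ : ℝ) :
    ‖(1 + 2 * (Real.pi : ℂ) * I * (δ : ℂ) * (ξ : ℂ))⁻¹‖ ^ 2
      ≤ (1 + ((2 * Real.pi * δ) ^ 2)⁻¹) / (1 + ξ ^ 2) := by
  rw [norm_factor_sq]
  have hc : 0 < (2 * Real.pi * δ) ^ 2 := by have := Real.pi_pos; positivity
  set c := (2 * Real.pi * δ) ^ 2
  rw [inv_eq_one_div, div_le_div_iff₀ (by positivity) (by positivity)]
  have : (1 + c⁻¹) * (1 + c * ξ ^ 2) = 1 + c * ξ ^ 2 + c⁻¹ + ξ ^ 2 := by field_simp; ring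
  rw [this]
  have h1 : 0 ≤ c * ξ ^ 2 := by positivity
  have h2 : 0 ≤ c⁻¹ := by positivity
  linarith

/-- With at least two factors the product decays quadratically. -/
lemma norm_prod_factor_le {m : ℕ} (hm : 2 ≤ m) (δ : Fin m → ℝ) (hδ : ∀ i, δ i ≠ 0) :
    ∃ C : ℝ, ∀ ξ : ℝ, ‖∏ k, (1 + 2 * (Real.pi : ℂ) * I * (δ k : ℂ) * (ξ : ℂ))⁻¹‖
      ≤ C / (1 + ξ ^ 2) := by
  obtain ⟨m, rfl⟩ := Nat.exists_eq_add_of_le' hm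
  refine ⟨((1 + ((2 * Real.pi * δ 0) ^ 2)⁻¹) + (1 + ((2 * Real.pi * δ 1) ^ 2)⁻¹)) / 2, fun ξ => ?_⟩
  rw [Fin.prod_univ_succ, Fin.prod_univ_succ, norm_mul, norm_mul, norm_prod]
  have h0 := norm_factor_sq_le (hδ 0) ξ
  have h1 := norm_factor_sq_le (hδ 1) ξ
  have h2 : ∏ i : Fin m, ‖(1 + 2 * (Real.pi : ℂ) * I * (δ i.succ.succ : ℂ) * (ξ : ℂ))⁻¹‖ ≤ 1 :=
    Finset.prod_le_one (fun _ _ => norm_nonneg _) fun _ _ => norm_factor_le_one _ _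
  simp only [Fin.succ_zero_eq_one]
  set a := ‖(1 + 2 * (Real.pi : ℂ) * I * (δ 0 : ℂ) * (ξ : ℂ))⁻¹‖
  set b := ‖(1 + 2 * (Real.pi : ℂ) * I * (δ 1 : ℂ) * (ξ : ℂ))⁻¹‖
  have ha : 0 ≤ a := norm_nonneg _
  have hb : 0 ≤ b := norm_nonneg _
  have h3 : a * (b * ∏ i : Fin m, ‖(1 + 2 * (Real.pi : ℂ) * I * (δ i.succ.succ : ℂ) * (ξ : ℂ))⁻¹‖)
      ≤ a * b := by
    apply mul_le_mul_of_nonneg_left _ ha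
    exact mul_le_of_le_one_right hb h2
  have h4 : ((1 + ((2 * Real.pi * δ 0) ^ 2)⁻¹) + (1 + ((2 * Real.pi * δ 1) ^ 2)⁻¹)) / 2 / (1 + ξ ^ 2)
    = ((1 + ((2 * Real.pi * δ 0) ^ 2)⁻¹) / (1 + ξ ^ 2)
      + (1 + ((2 * Real.pi * δ 1) ^ 2)⁻¹) / (1 + ξ ^ 2)) / 2 := by ring
  rw [h4]
  nlinarith [sq_nonneg (a - b)]

lemma decay_affine {f : ℝ → ℂ} {C : ℝ} (hf : ∀ x, ‖f x‖ ≤ C / (1 + x ^ 2)) {a : ℝ} (ha : a ≠ 0)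
    (b : ℝ) : ∃ C' : ℝ, ∀ x, ‖f (a * x + b)‖ ≤ C' / (1 + x ^ 2) := by
  have hC : 0 ≤ C := by
    have := (norm_nonneg _).trans (hf 0)
    simpa using this
  refine ⟨C * (1 + (2 + 2 * b ^ 2) / a ^ 2), fun x => (hf _).trans ?_⟩
  have ha2 : 0 < a ^ 2 := by positivity
  rw [div_le_div_iff₀ (by positivity) (by positivity), mul_assoc]
  apply mul_le_mul_of_nonneg_left _ hC
  set y := a * x + b with hy
  have h1 : x ^ 2 * a ^ 2 ≤ 2 * y ^ 2 + 2 * b ^ 2 := by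
    have : x ^ 2 * a ^ 2 = (y - b) ^ 2 := by rw [hy]; ring
    nlinarith [sq_nonneg (y + b)]
  have h2 : x ^ 2 ≤ (2 * y ^ 2 + 2 * b ^ 2) / a ^ 2 := by rwa [le_div_iff₀ ha2]
  have h3 : (2 * y ^ 2 + 2 * b ^ 2) / a ^ 2 ≤ (2 + 2 * b ^ 2) / a ^ 2 * (1 + y ^ 2) := by
    rw [div_mul_eq_mul_div]
    gcongr
    nlinarith [mul_nonneg (sq_nonneg b) (sq_nonneg y)]
  nlinarith [sq_nonneg y]

lemma isBigO_of_decay {f : ℝ → ℂ} {C : ℝ} (hf : ∀ x, ‖f x‖ ≤ C / (1 + x ^ 2)) :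
    f =O[Filter.cocompact ℝ] fun x : ℝ => |x| ^ (-(2 : ℝ)) := by
  have hC : 0 ≤ C := by
    have := (norm_nonneg _).trans (hf 0)
    simpa using this
  refine Asymptotics.IsBigO.of_bound C ?_
  have : ∀ᶠ x : ℝ in Filter.cocompact ℝ, x ≠ 0 := by
    have := (isCompact_singleton (x := (0 : ℝ))).compl_mem_cocompact
    filter_upwards [this] with x hx using by simpa using hx
  filter_upwards [this] with x hx
  refine (hf x).trans ?_
  rw [Real.norm_of_nonneg (by positivity), Real.rpow_neg (abs_nonneg x), div_eq_mul_inv]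
  have : |x| ^ (2 : ℝ) = x ^ 2 := by
    rw [Real.rpow_two, sq_abs]
  rw [this]
  have hx2 : 0 < x ^ 2 := by positivity
  gcongr
  linarith

lemma summable_of_decay {f : ℝ → ℂ} {C : ℝ} (hf : ∀ x, ‖f x‖ ≤ C / (1 + x ^ 2)) :
    Summable fun n : ℤ => f n :=
  summable_of_isBigO (Real.summable_abs_int_rpow one_lt_two)
    ((isBigO_of_decay hf).comp_tendsto Int.tendsto_coe_cofinite)

lemma integrable_of_decay {f : ℝ → ℂ} {C : ℝ} (hc : Continuous f)
    (hf : ∀ x, ‖f x‖ ≤ C / (1 + x ^ 2)) : Integrable f := by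
  refine (integrable_inv_one_add_sq.const_mul C).mono' hc.aestronglyMeasurable ?_
  exact Filter.Eventually.of_forall fun x => by simpa [div_eq_mul_inv] using hf x

/-- Nonvanishing of the Zak transform, stated for its Fourier series: the sum is a nonzero multiple
of the function obtained from the iterated construction. -/
lemma tsum_fourier_ne_zero {m : ℕ} (hm : 2 ≤ m) (δ : Fin m → ℝ) (hδ : ∀ i, δ i ≠ 0) (ν t : ℝ)
    (hν : exp (-(2 * Real.pi * I * ν)) ≠ -1) :
    ∑' n : ℤ, (∏ k, (1 + 2 * (Real.pi : ℂ) * I * (δ k : ℂ) * ((n - ν : ℝ) : ℂ))⁻¹)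
      * exp (2 * Real.pi * I * n * t) ≠ 0 := by
  obtain ⟨C₀, hC₀⟩ := norm_prod_factor_le hm δ hδ
  obtain ⟨C₁, hC₁⟩ := decay_affine hC₀ one_ne_zero (-ν)
  have hsum := summable_of_decay hC₁
  set ζ : ℂ := exp (-(2 * Real.pi * I * ν)) with hζ
  have hζn : ‖ζ‖ = 1 := by
    rw [hζ, Complex.norm_exp]; simp
  have hsq : ζ.re ^ 2 + ζ.im ^ 2 = 1 := by
    have : normSq ζ = 1 := by rw [normSq_eq_norm_sq, hζn]; simp
    rw [normSq_apply] at this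
    linarith
  have hre : 0 < 1 + ζ.re := by
    by_contra hcon
    push Not at hcon
    have h1 : ζ.re = -1 := by nlinarith [sq_nonneg ζ.im]
    have h2 : ζ.im = 0 := by
      rw [h1] at hsq
      have : ζ.im ^ 2 = 0 := by linarith
      exact pow_eq_zero_iff two_ne_zero |>.mp this
    exact hν (Complex.ext (by simpa using h1) (by simpa using h2))
  -- both `ω` and `ω ζ` have real part `1 + Re ζ`
  set ω : ℂ := 1 + conj ζ with hω
  have hω1 : 0 < ω.re := by simpa [hω] using hre
  have hω2 : 0 < (ω * ζ).re := by
    have : (ω * ζ).re = 1 + ζ.re := by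
      simp [hω]
      linarith
    rw [this]; exact hre
  obtain ⟨m, rfl⟩ := Nat.exists_eq_add_of_le' hm
  obtain ⟨F, C, hC, h⟩ := exists_quasiPos ν hω1 hω2 m (fun i => δ i.castSucc) (fun i => hδ _)
  obtain ⟨F', hF'c, h', hz⟩ := quasiPos_step h hω1 hω2 (hδ (Fin.last _))
  set c : ℤ → ℂ := fun n => ∏ k, (1 + 2 * (Real.pi : ℂ) * I * (δ k : ℂ) * ((n - ν : ℝ) : ℂ))⁻¹
    with hc
  have hc0 : ∀ n, c n ≠ 0 := fun n =>
    Finset.prod_ne_zero_iff.mpr fun k _ => inv_ne_zero (one_add_ne_zero _ _)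
  have hcoef : ∀ n : ℤ, ∫ u in (0 : ℝ)..1, exp (-(2 * Real.pi * I * (n - ν) * u)) * F' u
      = C * c n := by
    intro n
    rw [h'.coef n]
    simp only [hc, Fin.prod_univ_castSucc (n := m + 1)]
    push_cast
    ring
  have hne : ∀ x, F' x ≠ 0 := by
    intro x hx
    have hall := hz ⟨x, hx⟩
    have := hcoef 0
    simp only [hall, mul_zero, intervalIntegral.integral_zero] at this
    exact mul_ne_zero hC (hc0 0) this.symm
  set p : ℝ → ℂ := fun u => exp (2 * Real.pi * I * ν * u) * F' u with hp
  have hpc : Continuous p := by fun_prop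
  have hper : Function.Periodic p 1 := by
    intro u
    simp only [hp, h'.quasi, ← mul_assoc, ← Complex.exp_add]
    congr 2
    push_cast; ring
  have : Fact ((0 : ℝ) < 1) := ⟨one_pos⟩
  let P : C(AddCircle (1 : ℝ), ℂ) := ⟨hper.lift, continuous_coinduced_dom.mpr hpc⟩
  have hPcoe : ∀ u : ℝ, P (u : AddCircle (1 : ℝ)) = p u := fun u => hper.lift_coe u
  have hPcoef : ∀ n, fourierCoeff P n = C * c n := by
    intro n
    rw [fourierCoeff_eq_intervalIntegral P n 0, ← hcoef n]
    simp only [zero_add, div_one, one_smul]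
    refine intervalIntegral.integral_congr fun u _ => ?_
    simp only [hPcoe, hp, fourier_coe_apply, smul_eq_mul, ← mul_assoc, ← Complex.exp_add]
    congr 2
    push_cast; ring
  have hsum' : Summable c := by
    refine hsum.congr fun n => ?_
    simp [hc, sub_eq_add_neg]
  have hS := has_pointwise_sum_fourier_series_of_summable (f := P)
    (by simpa only [funext hPcoef] using hsum'.mul_left C) (t : AddCircle (1 : ℝ))
  have e : p t = C * ∑' n : ℤ, c n * exp (2 * Real.pi * I * n * t) := by
    rw [← hPcoe, ← hS.tsum_eq, ← tsum_mul_left]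
    refine tsum_congr fun n => ?_
    rw [hPcoef, fourier_coe_apply, smul_eq_mul]
    simp [mul_assoc]
  intro h0
  rw [h0, mul_zero] at e
  exact mul_ne_zero (exp_ne_zero _) (hne t) e

/-! ### The Zak transform of `g` -/

/-- Quadratic decay of `g`: its Fourier transform has two integrable derivatives. -/
lemma g_decay {m : ℕ} (hm : 2 ≤ m) (δ : Fin m → ℝ) (hδ : ∀ i, δ i ≠ 0)
    (g : ℝ → ℂ) (hgcont : Continuous g) (hg : Integrable g)
    (hFT : ∀ ξ : ℝ, 𝓕 g ξ =
      ∏ k : Fin m, (1 + 2 * (Real.pi : ℂ) * Complex.I * (δ k : ℂ) * (ξ : ℂ))⁻¹) :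
    ∃ C : ℝ, ∀ x, ‖g x‖ ≤ C / (1 + x ^ 2) := by
  obtain ⟨C, hC⟩ := norm_prod_factor_le hm δ hδ
  set a : Fin m → ℂ := fun k => 2 * (Real.pi : ℂ) * I * (δ k : ℂ) with ha
  set r : Fin m → ℝ → ℂ := fun k ξ => (1 + a k * (ξ : ℂ))⁻¹ with hr
  have hrc : ∀ k, Continuous (r k) := fun k =>
    Continuous.inv₀ (by fun_prop) fun ξ => one_add_ne_zero (δ k) ξ
  have hr1 : ∀ k ξ, ‖r k ξ‖ ≤ 1 := fun k ξ => norm_factor_le_one (δ k) ξ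
  have hrd : ∀ k ξ, HasDerivAt (r k) (-(a k) * r k ξ ^ 2) ξ := by
    intro k ξ
    have h1 : HasDerivAt (fun u : ℝ => 1 + a k * (u : ℂ)) (a k) ξ := by
      simpa using (((hasDerivAt_id (ξ : ℂ)).const_mul (a k)).const_add 1).comp_ofReal
    have h2 := h1.inv (one_add_ne_zero (δ k) ξ)
    convert! h2 using 1
    simp only [hr]
    rw [inv_pow, div_eq_mul_inv]
  set G : ℝ → ℂ := fun ξ => ∏ k, r k ξ with hG
  have hGc : Continuous G := by fun_prop
  have hGi : Integrable G := integrable_of_decay hGc hC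
  set S : ℝ → ℂ := fun ξ => ∑ k, -(a k) * r k ξ with hS
  have hSc : Continuous S := by fun_prop
  set T : ℝ → ℂ := fun ξ => ∑ k, (a k) ^ 2 * r k ξ ^ 2 with hT
  have hTc : Continuous T := by fun_prop
  have hGd : ∀ ξ, HasDerivAt G (G ξ * S ξ) ξ := by
    intro ξ
    have := HasDerivAt.fun_finsetProd (u := Finset.univ) (f := r) (x := ξ) fun k _ => hrd k ξ
    convert! this using 1
    simp only [hS, hG, Finset.mul_sum]
    refine Finset.sum_congr rfl fun k hk => ?_
    rw [← Finset.prod_erase_mul _ _ hk, smul_eq_mul]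
    ring
  have hSd : ∀ ξ, HasDerivAt S (T ξ) ξ := by
    intro ξ
    have := HasDerivAt.fun_sum (u := Finset.univ) fun k _ => (hrd k ξ).const_mul (-(a k))
    convert! this using 1
    simp only [hT]
    refine Finset.sum_congr rfl fun k hk => ?_
    ring
  have hGdd : ∀ ξ, HasDerivAt (fun u => G u * S u) (G ξ * S ξ * S ξ + G ξ * T ξ) ξ :=
    fun ξ => (hGd ξ).mul (hSd ξ)
  have hSb : ∀ ξ, ‖S ξ‖ ≤ ∑ k, ‖a k‖ := fun ξ =>
    norm_sum_le_of_le _ fun k _ => by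
      rw [norm_mul, norm_neg]
      exact mul_le_of_le_one_right (norm_nonneg _) (hr1 k ξ)
  have hTb : ∀ ξ, ‖T ξ‖ ≤ ∑ k, ‖a k‖ ^ 2 := fun ξ =>
    norm_sum_le_of_le _ fun k _ => by
      rw [norm_mul, norm_pow, norm_pow]
      exact mul_le_of_le_one_right (by positivity) (pow_le_one₀ (norm_nonneg _) (hr1 k ξ))
  have hd1 : deriv G = fun u => G u * S u := funext fun ξ => (hGd ξ).deriv
  have hd2 : deriv (deriv G) = fun u => G u * S u * S u + G u * T u := by
    rw [hd1]; exact funext fun ξ => (hGdd ξ).deriv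
  have hi1 : Integrable (fun u => G u * S u) :=
    hGi.mul_bdd hSc.aestronglyMeasurable (Filter.Eventually.of_forall hSb)
  have hi2 : Integrable (fun u => G u * S u * S u + G u * T u) :=
    (hi1.mul_bdd hSc.aestronglyMeasurable (Filter.Eventually.of_forall hSb)).add
      (hGi.mul_bdd hTc.aestronglyMeasurable (Filter.Eventually.of_forall hTb))
  have hF1 := Real.fourier_deriv hGi (fun ξ => (hGd ξ).differentiableAt) (by rwa [hd1])
  have hF2 := Real.fourier_deriv (f := deriv G) (by rwa [hd1])
    (by rw [hd1]; exact fun ξ => (hGdd ξ).differentiableAt) (by rwa [hd2])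
  have hnorm : ∀ (f : ℝ → ℂ) (x : ℝ), ‖𝓕 f x‖ ≤ ∫ v, ‖f v‖ := fun f x =>
    VectorFourier.norm_fourierIntegral_le_integral_norm _ _ _ _ _
  have hFG : 𝓕 g = G := funext hFT
  have hinv : 𝓕⁻ (𝓕 g) = g := hgcont.fourierInv_fourier_eq hg (by rwa [hFG])
  have hgx : ∀ x, g x = 𝓕 G (-x) := by
    intro x
    rw [← Real.fourierInv_eq_fourier_neg, ← hFG, hinv]
  refine ⟨(∫ v, ‖G v‖) + ∫ v, ‖deriv (deriv G) v‖, fun x => ?_⟩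
  rw [le_div_iff₀ (by positivity), hgx]
  have h1 := hnorm G (-x)
  have h2 := hnorm (deriv (deriv G)) (-x)
  have h3 : ‖𝓕 (deriv (deriv G)) (-x)‖ = (2 * Real.pi) ^ 2 * x ^ 2 * ‖𝓕 G (-x)‖ := by
    rw [hF2, hF1]
    simp only [norm_smul, norm_mul]
    simp [abs_of_pos Real.pi_pos]
    ring_nf
    simp
  rw [h3] at h2
  have h4 : 1 ≤ (2 * Real.pi) ^ 2 := by nlinarith [Real.pi_gt_three]
  have h5 : 0 ≤ x ^ 2 * ‖𝓕 G (-x)‖ := by positivity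
  nlinarith

/-- The Zak transform of `g` vanishes at most where the multiplier is `-1`. -/
lemma zak_ne_zero {m : ℕ} (hm : 2 ≤ m) (δ : Fin m → ℝ) (hδ : ∀ i, δ i ≠ 0)
    (g : ℝ → ℂ) (hgcont : Continuous g) (hg : Integrable g)
    (hFT : ∀ ξ : ℝ, 𝓕 g ξ =
      ∏ k : Fin m, (1 + 2 * (Real.pi : ℂ) * Complex.I * (δ k : ℂ) * (ξ : ℂ))⁻¹)
    {M : ℝ} (hM : 0 < M) (x ν : ℝ) (hν : exp (-(2 * Real.pi * I * ν)) ≠ -1) :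
    ∑' k : ℤ, g (x + k * M) * exp (2 * Real.pi * I * ν * k) ≠ 0 := by
  obtain ⟨C, hC⟩ := g_decay hm δ hδ g hgcont hg hFT
  obtain ⟨C₀, hC₀⟩ := norm_prod_factor_le hm δ hδ
  have hM' : (M : ℂ) ≠ 0 := by exact_mod_cast hM.ne'
  set t : ℝ := x / M with ht
  set f : ℝ → ℂ := fun u => g (M * u + x) * exp (2 * Real.pi * I * ν * u) with hf
  have hfc : Continuous f := by fun_prop
  have hen : ∀ (s : ℝ), ‖exp (2 * Real.pi * I * s)‖ = 1 := by
    intro s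
    rw [Complex.norm_exp]; simp
  obtain ⟨C', hC'⟩ := decay_affine hC hM.ne' x
  have hfd : ∀ u, ‖f u‖ ≤ C' / (1 + u ^ 2) := by
    intro u
    simp only [hf, norm_mul]
    have := hen (ν * u)
    push_cast at this
    rw [← mul_assoc] at this
    rw [this, mul_one]
    exact hC' u
  have hFf : ∀ ξ : ℝ, 𝓕 f ξ = (M : ℂ)⁻¹ * exp (2 * Real.pi * I * ((ξ - ν) * t : ℝ)) *
      ∏ k : Fin m, (1 + 2 * (Real.pi : ℂ) * I * (δ k : ℂ) * (((1 / M) * ξ + (-(ν / M)) : ℝ) : ℂ))⁻¹ := by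
    intro ξ
    rw [← hFT, Real.fourier_real_eq_integral_exp_smul, Real.fourier_real_eq_integral_exp_smul]
    set φ : ℝ → ℂ := fun v => exp (↑(-2 * Real.pi * v * ((1 / M) * ξ + (-(ν / M)))) * I) • g v
      with hφ
    have e1 : ∀ u : ℝ, exp (↑(-2 * Real.pi * u * ξ) * I) • f u
        = exp (2 * Real.pi * I * ((ξ - ν) * t : ℝ)) * φ (M * (u + t)) := by
      intro u
      have : M * (u + t) = M * u + x := by rw [ht]; field_simp
      simp only [hφ, hf, this, smul_eq_mul]
      rw [mul_comm (g _), ← mul_assoc, ← mul_assoc, ← Complex.exp_add, ← Complex.exp_add]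
      congr 2
      rw [ht]
      push_cast
      field_simp
      ring
    simp_rw [e1]
    rw [integral_const_mul, integral_add_right_eq_self (fun u => φ (M * u)),
      Measure.integral_comp_mul_left, abs_of_pos (inv_pos.mpr hM), Complex.real_smul]
    push_cast
    ring
  obtain ⟨C₂, hC₂⟩ := decay_affine hC₀ (one_div_ne_zero hM.ne') (-(ν / M))
  have hFd : ∀ ξ, ‖𝓕 f ξ‖ ≤ (M⁻¹ * C₂) / (1 + ξ ^ 2) := by
    intro ξ
    rw [hFf, norm_mul, norm_mul, hen, mul_one, norm_inv, Complex.norm_real, Real.norm_eq_abs,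
      abs_of_pos hM, mul_div_assoc]
    exact mul_le_mul_of_nonneg_left (hC₂ ξ) (by positivity)
  have hP := Real.tsum_eq_tsum_fourier_of_rpow_decay hfc one_lt_two (isBigO_of_decay hfd)
    (isBigO_of_decay hFd) 0
  have e2 : ∑' k : ℤ, g (x + k * M) * exp (2 * Real.pi * I * ν * k)
      = ∑' n : ℤ, f (0 + n) := by
    refine tsum_congr fun k => ?_
    simp only [hf, zero_add]
    rw [mul_comm M, add_comm x]
    push_cast
    rfl
  rw [e2, hP]
  have hne := tsum_fourier_ne_zero hm (fun k => δ k / M) (fun k => div_ne_zero (hδ k) hM.ne') ν t hν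
  have e3 : ∑' n : ℤ, 𝓕 f n * fourier n ((0 : ℝ) : UnitAddCircle)
      = ((M : ℂ)⁻¹ * exp (-(2 * Real.pi * I * (ν * t)))) * ∑' n : ℤ,
        (∏ k, (1 + 2 * (Real.pi : ℂ) * I * ((δ k / M : ℝ) : ℂ) * ((n - ν : ℝ) : ℂ))⁻¹)
      * exp (2 * Real.pi * I * n * t) := by
    rw [← tsum_mul_left]
    refine tsum_congr fun n => ?_
    rw [hFf]
    have e4 : ∀ k, (2 * (Real.pi : ℂ) * I * (δ k : ℂ) * (((1 / M) * (n : ℝ) + (-(ν / M)) : ℝ) : ℂ))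
        = 2 * (Real.pi : ℂ) * I * ((δ k / M : ℝ) : ℂ) * ((n - ν : ℝ) : ℂ) := by
      intro k
      push_cast
      field_simp
      ring
    simp_rw [e4]
    have e5 : exp (2 * Real.pi * I * (((n : ℝ) - ν) * t : ℝ))
        = exp (-(2 * Real.pi * I * (ν * t))) * exp (2 * Real.pi * I * n * t) := by
      rw [← Complex.exp_add]
      congr 1
      push_cast; ring
    rw [e5, fourier_coe_apply]
    simp
    ring
  rw [e3]
  exact mul_ne_zero (mul_ne_zero (inv_ne_zero hM') (exp_ne_zero _)) hne

/-! ### Reduction of the frame property to the Zak transform -/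

lemma sum_range_periodic {N : ℕ} (P : ℤ → ℂ) (hP : ∀ j, P (j + N) = P j) (q : ℕ) :
    ∑ k ∈ Finset.range N, P (q - k) = ∑ s ∈ Finset.range N, P s := by
  have hstep : ∀ j : ℤ, ∑ k ∈ Finset.range N, P (j + 1 - k) = ∑ k ∈ Finset.range N, P (j - k) := by
    intro j
    have h1 := Finset.sum_range_succ (fun k : ℕ => P (j + 1 - k)) N
    have h2 := Finset.sum_range_succ' (fun k : ℕ => P (j + 1 - k)) N
    have h3 : P (j + 1 - N) = P (j + 1) := by
      rw [← hP (j + 1 - N)]; congr 1; ring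
    have h4 : ∀ k : ℕ, P (j + 1 - ((k + 1 : ℕ) : ℤ)) = P (j - k) := by
      intro k; congr 1; push_cast; ring
    rw [h1] at h2
    simp only [h3, h4, Nat.cast_zero, sub_zero] at h2
    exact add_right_cancel h2
  have hconst : ∀ n : ℕ, ∑ k ∈ Finset.range N, P (n - k) = ∑ k ∈ Finset.range N, P (0 - k) := by
    intro n
    induction n with
    | zero => simp
    | succ n ih => rw [← ih, ← hstep n]; push_cast; rfl
  rw [hconst q, ← hconst (N - 1), ← Finset.sum_range_reflect (fun s : ℕ => P s)]
  refine Finset.sum_congr rfl fun k hk => ?_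
  have hk' := Finset.mem_range.mp hk
  congr 1
  omega

lemma exp_two_pi_pow (N : ℕ) (r s : ℕ) :
    exp (2 * Real.pi * I * (r / N : ℝ) * s) = (exp (2 * Real.pi * I / N) ^ s) ^ r := by
  rw [← Complex.exp_nat_mul, ← Complex.exp_nat_mul]
  congr 1
  push_cast
  ring

lemma pow_injective_root {N : ℕ} (hN : 0 < N) :
    Function.Injective fun s : Fin N => exp (2 * Real.pi * I / N) ^ (s : ℕ) := by
  intro a b hab
  exact Fin.ext ((Complex.isPrimitiveRoot_exp N hN.ne').pow_inj a.2 b.2 hab)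

/-- Nonvanishing of the finite Zak transform makes the analysis map injective. -/
lemma gabor_injective {N M : ℕ} (hN : 0 < N) (hM : 0 < M) (G : ℤ → ℂ)
    (hG : ∀ j, G (j + (N * M : ℕ)) = G j)
    (hZ : ∀ (x : ℤ) (r : ℕ), ∑ s ∈ Finset.range N,
      G (x + s * M) * exp (2 * Real.pi * I * (r / N : ℝ) * s) ≠ 0)
    (f : Fin (N * M) → ℂ)
    (hf : ∀ k < N, ∀ l < M, gaborCoefC G (N * M) M M f k l = 0) : f = 0 := by
  have hM' : (M : ℂ) ≠ 0 := by exact_mod_cast hM.ne'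
  set η : ℂ := exp (2 * Real.pi * I / M) with hη
  set ξ : ℂ := exp (2 * Real.pi * I / N) with hξ
  have hξ0 : ξ ≠ 0 := exp_ne_zero _
  have hξN : ξ ^ N = 1 := (Complex.isPrimitiveRoot_exp N hN.ne').pow_eq_one
  -- inverting the Fourier transform in the modulation parameter
  have h1 : ∀ k < N, ∀ p : Fin M, ∑ q : Fin N, f (finProdFinEquiv (q, p)) *
      conj (G (p + ((q : ℤ) - k) * M)) = 0 := by
    intro k hk
    have hinj : Function.Injective fun p : Fin M => conj (η ^ (p : ℕ)) :=
      (starRingEnd ℂ).injective.comp (pow_injective_root hM)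
    have := Matrix.eq_zero_of_forall_pow_sum_mul_pow_eq_zero hinj
      (v := fun p => ∑ q : Fin N, f (finProdFinEquiv (q, p)) *
        conj (G (p + ((q : ℤ) - k) * M))) (by
      intro l
      rw [← hf k hk l l.2, gaborCoefC, ← finProdFinEquiv.sum_comp, Fintype.sum_prod_type,
        Finset.sum_comm]
      refine Finset.sum_congr rfl fun p _ => ?_
      rw [Finset.sum_mul]
      refine Finset.sum_congr rfl fun q _ => ?_
      have e1 : exp (2 * (Real.pi : ℂ) * I * ((l : ℕ) : ℂ) *
          (((finProdFinEquiv (q, p) : Fin (N * M)) : ℕ) : ℂ) / (M : ℂ)) = (η ^ (p : ℕ)) ^ (l : ℕ) := by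
        rw [← exp_two_pi_pow, Complex.exp_eq_exp_iff_exists_int]
        refine ⟨(l : ℕ) * (q : ℕ), ?_⟩
        simp only [finProdFinEquiv_apply_val]
        push_cast
        field_simp
      have e2 : (((finProdFinEquiv (q, p) : Fin (N * M)) : ℕ) : ℤ) - k * (M : ℤ)
          = p + ((q : ℤ) - k) * M := by
        simp only [finProdFinEquiv_apply_val]
        push_cast
        ring
      rw [e1, e2, ← starRingEnd_apply, map_mul, map_pow (starRingEnd ℂ) (η ^ (p : ℕ))]
      ring)
    exact fun p => congrFun this p
  -- inverting the circular convolution with `s ↦ conj (G (p + s M))`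
  have h2 : ∀ p : Fin M, (fun q : Fin N => f (finProdFinEquiv (q, p))) = 0 := by
    intro p
    refine Matrix.eq_zero_of_forall_pow_sum_mul_pow_eq_zero (pow_injective_root hN) fun r => ?_
    set P : ℤ → ℂ := fun j => conj (G (p + j * M) * (ξ ^ (r : ℕ)) ^ j) with hPdef
    have hz0 : ξ ^ (r : ℕ) ≠ 0 := pow_ne_zero _ hξ0
    have hzN : (ξ ^ (r : ℕ)) ^ N = 1 := by rw [← pow_mul, mul_comm, pow_mul, hξN, one_pow]
    have hzconj : ξ ^ (r : ℕ) * conj (ξ ^ (r : ℕ)) = 1 := by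
      rw [Complex.mul_conj, normSq_eq_norm_sq, Complex.norm_eq_one_of_pow_eq_one hzN hN.ne']
      simp
    have hP : ∀ j, P (j + N) = P j := by
      intro j
      simp only [hPdef]
      rw [zpow_add₀ hz0, zpow_natCast, hzN, mul_one, ← hG (p + j * M)]
      congr 3
      push_cast; ring
    have hsum := sum_range_periodic P hP
    have hPne : ∑ s ∈ Finset.range N, P s ≠ 0 := by
      have := hZ p r
      rw [← map_ne_zero (starRingEnd ℂ), map_sum] at this
      convert this using 3 with s hs
      rw [exp_two_pi_pow, zpow_natCast, ← pow_mul, ← pow_mul, mul_comm s]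
    have hprod : (∑ q : Fin N, f (finProdFinEquiv (q, p)) * (ξ ^ (q : ℕ)) ^ (r : ℕ))
        * ∑ s ∈ Finset.range N, P s = 0 := by
      have hk : ∀ k ∈ Finset.range N, (ξ ^ (r : ℕ)) ^ k * ∑ q : Fin N, f (finProdFinEquiv (q, p)) *
          conj (G (p + ((q : ℤ) - k) * M)) = 0 := by
        intro k hk
        rw [h1 k (Finset.mem_range.mp hk), mul_zero]
      rw [← Finset.sum_eq_zero hk]
      simp_rw [Finset.mul_sum (s := Finset.univ)]
      rw [Finset.sum_comm, Finset.sum_mul]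
      refine Finset.sum_congr rfl fun q _ => ?_
      rw [← hsum q, Finset.mul_sum]
      refine Finset.sum_congr rfl fun k _ => ?_
      simp only [hPdef, map_mul]
      have e3 : (ξ ^ (q : ℕ)) ^ (r : ℕ) * conj ((ξ ^ (r : ℕ)) ^ ((q : ℤ) - k))
          = (ξ ^ (r : ℕ)) ^ k := by
        have hzc : conj (ξ ^ (r : ℕ)) = (ξ ^ (r : ℕ))⁻¹ := eq_inv_of_mul_eq_one_right hzconj
        rw [← pow_mul, mul_comm (q : ℕ), pow_mul, map_zpow₀, hzc, inv_zpow, zpow_sub₀ hz0,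
          zpow_natCast, zpow_natCast]
        field_simp
      linear_combination (f (finProdFinEquiv (q, p)) * conj (G (p + ((q : ℤ) - k) * M))) * e3
    exact (mul_eq_zero.mp hprod).resolve_right hPne
  funext j
  obtain ⟨⟨q, p⟩, rfl⟩ := finProdFinEquiv.surjective j
  exact congrFun (h2 p) q

lemma periodizeSample_add (K : ℕ) (g : ℝ → ℂ) (j : ℤ) :
    periodizeSample K g (j + K) = periodizeSample K g j := by
  rw [periodizeSample, periodizeSample, ← (Equiv.addRight (1 : ℤ)).tsum_eq]
  refine tsum_congr fun n => ?_
  congr 1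
  simp
  ring

/-- The finite Zak transform of the periodization is the Zak transform of `g` on `ℤ`, by writing
`k = nN + s`. -/
lemma finite_zak_eq {g : ℝ → ℂ} {C : ℝ} (hC : ∀ x, ‖g x‖ ≤ C / (1 + x ^ 2)) {N M : ℕ}
    (hN : 0 < N) (hM : 0 < M) (x : ℤ) (r : ℕ) :
    ∑ s ∈ Finset.range N,
      periodizeSample (N * M) g (x + s * M) * exp (2 * Real.pi * I * (r / N : ℝ) * s)
    = ∑' k : ℤ, g ((x : ℝ) + k * (M : ℝ)) * exp (2 * Real.pi * I * (r / N : ℝ) * k) := by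
  have : NeZero N := ⟨hN.ne'⟩
  have hN' : (N : ℂ) ≠ 0 := by exact_mod_cast hN.ne'
  have hM' : (M : ℝ) ≠ 0 := by exact_mod_cast hM.ne'
  obtain ⟨C', hC'⟩ := decay_affine hC hM' x
  have hsum : Summable fun k : ℤ =>
      g ((x : ℝ) + k * (M : ℝ)) * exp (2 * Real.pi * I * (r / N : ℝ) * k) := by
    have h := summable_of_decay (f := fun u => g (M * u + x) * exp (2 * Real.pi * I * (r / N : ℝ) * u))
      (C := C') (by
        intro u
        have : ‖exp (2 * Real.pi * I * (r / N : ℝ) * u)‖ = 1 := by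
          rw [Complex.norm_exp]; simp
        rw [norm_mul, this, mul_one]
        exact hC' u)
    refine h.congr fun k => ?_
    rw [mul_comm (M : ℝ), add_comm (x : ℝ)]
    push_cast
    rfl
  set T : ℤ → ℂ := fun k => g ((x : ℝ) + k * (M : ℝ)) * exp (2 * Real.pi * I * (r / N : ℝ) * k)
    with hT
  have hs := (Equiv.prodComm (Fin N) ℤ).summable_iff.mpr
    ((Int.divModEquiv N).symm.summable_iff.mpr hsum)
  have e : ∑' k, T k = ∑ s : Fin N, ∑' n : ℤ, T (n * N + (s : ℕ)) := by
    rw [← (Int.divModEquiv N).symm.tsum_eq, ← (Equiv.prodComm (Fin N) ℤ).tsum_eq]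
    refine (Summable.tsum_prod hs).trans ?_
    rw [tsum_fintype]
    rfl
  rw [e, Finset.sum_range]
  refine Finset.sum_congr rfl fun s _ => ?_
  rw [periodizeSample, ← tsum_mul_right, ← (Equiv.neg ℤ).tsum_eq]
  refine tsum_congr fun n => ?_
  simp only [hT]
  congr 1
  · congr 1
    simp
    ring
  · rw [Complex.exp_eq_exp_iff_exists_int]
    refine ⟨-(r * n), ?_⟩
    push_cast
    field_simp
    ring

/-- In finite dimension an injective analysis map is bounded below. -/
lemma isGaborFrameC_of_injective (G : ℤ → ℂ) (K a M : ℕ)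
    (h : ∀ f : Fin K → ℂ, (∀ k < K / a, ∀ l < M, gaborCoefC G K a M f k l = 0) → f = 0) :
    IsGaborFrameC G K a M := by
  let L : EuclideanSpace ℂ (Fin K) →ₗ[ℂ] EuclideanSpace ℂ (Fin (K / a) × Fin M) :=
    { toFun := fun f => WithLp.toLp 2 fun kl => gaborCoefC G K a M f kl.1 kl.2
      map_add' := by
        intro f f'
        ext kl
        simp [gaborCoefC, add_mul, Finset.sum_add_distrib]
      map_smul' := by
        intro c f
        ext kl
        simp [gaborCoefC, Finset.mul_sum, mul_assoc] }
  have hker : LinearMap.ker L = ⊥ := by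
    rw [LinearMap.ker_eq_bot']
    intro f hf
    have := h f fun k hk l hl => by
      have := congrFun (congrArg WithLp.ofLp hf) (⟨k, hk⟩, ⟨l, hl⟩)
      exact this
    ext j
    exact congrFun this j
  have hnorm : ∀ f : Fin K → ℂ, ∑ k ∈ Finset.range (K / a), ∑ l ∈ Finset.range M,
      ‖gaborCoefC G K a M f k l‖ ^ 2 = ‖L (WithLp.toLp 2 f)‖ ^ 2 := by
    intro f
    rw [EuclideanSpace.norm_sq_eq, Fintype.sum_prod_type, Finset.sum_range]
    refine Finset.sum_congr rfl fun k _ => ?_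
    rw [Finset.sum_range]
    rfl
  obtain ⟨c, hc, hL⟩ := L.exists_antilipschitzWith hker
  have hc' : (0 : ℝ) < c := by exact_mod_cast hc
  set B := ‖LinearMap.toContinuousLinearMap L‖ with hB
  refine ⟨((c : ℝ) ^ 2)⁻¹, B ^ 2 + 1, by positivity, by positivity, fun f => ?_⟩
  have hf : ∑ j : Fin K, ‖f j‖ ^ 2 = ‖(WithLp.toLp 2 f : EuclideanSpace ℂ (Fin K))‖ ^ 2 := by
    rw [EuclideanSpace.norm_sq_eq]
  rw [hnorm, hf]
  set F : EuclideanSpace ℂ (Fin K) := WithLp.toLp 2 f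
  constructor
  · have h1 : ‖F‖ ≤ c * ‖L F‖ := by
      have := hL.le_mul_dist F 0
      simpa using this
    rw [inv_mul_le_iff₀ (by positivity), ← mul_pow]
    exact pow_le_pow_left₀ (norm_nonneg _) h1 2
  · have h1 : ‖L F‖ ≤ B * ‖F‖ := (LinearMap.toContinuousLinearMap L).le_opNorm F
    have h2 := pow_le_pow_left₀ (norm_nonneg _) h1 2
    rw [mul_pow] at h2
    nlinarith [sq_nonneg ‖F‖]

theorem stmt12 (m : ℕ) (hm : 2 ≤ m) (δ : Fin m → ℝ) (hδ0 : ∀ i, δ i ≠ 0)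
    (g : ℝ → ℂ) (hgcont : Continuous g) (hg : Integrable g)
    (hFT : ∀ ξ : ℝ, 𝓕 g ξ =
      ∏ k : Fin m, (1 + 2 * (Real.pi : ℂ) * Complex.I * (δ k : ℂ) * (ξ : ℂ))⁻¹)
    (K M : ℕ) (hK : 0 < K) (hM : 0 < M)
    (hKM : M ∣ K) (hodd : Odd (K / M)) :
    IsGaborFrameC (periodizeSample K g) K M M := by
  set N := K / M with hNdef
  have hKN : K = N * M := (Nat.div_mul_cancel hKM).symm
  have hN : 0 < N := hodd.pos
  obtain ⟨C, hC⟩ := g_decay hm δ hδ0 g hgcont hg hFT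
  apply isGaborFrameC_of_injective
  rw [← hNdef]
  clear_value N
  subst hKN
  intro f hf
  refine gabor_injective hN hM _ (periodizeSample_add _ g) (fun x r => ?_) f hf
  rw [finite_zak_eq hC hN hM]
  refine zak_ne_zero hm δ hδ0 g hgcont hg hFT (by exact_mod_cast hM) x _ fun h => ?_
  -- an `N`-th root of unity with `N` odd cannot be `-1`
  have h1 := congrArg (· ^ N) h
  simp only [hodd.neg_one_pow, ← Complex.exp_nat_mul] at h1
  have h2 : exp ((N : ℂ) * -(2 * Real.pi * I * (r / N : ℝ))) = 1 := by
    rw [Complex.exp_eq_one_iff]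
    refine ⟨-r, ?_⟩
    have : (N : ℂ) ≠ 0 := by exact_mod_cast hN.ne'
    push_cast
    field_simp
  rw [h2] at h1
  norm_num at h1
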